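/- arXiv:2602.05442 — 3 statements merged into one kernel-verified Lean document; each statement's English description precedes it below -/
import Mathlib

section
/- Let n, m be positive integers, A ∈ ℝ^{n×n}, B ∈ ℝ^{n×m}, C ∈ ℝ^{m×n}, and suppose the m×m matrix C B is invertible. Let x_o, x̂_o : ℝ → ℝ^n be differentiable and u_0, d, d_0, u_{1eq} : ℝ → ℝ^m be functions such that for all t: ẋ_o(t) = A x_o(t) + B u_0(t), ẋ̂_o(t) = A x̂_o(t) + B (u_0(t) + d(t) + d_0(t) + u_{1eq}(t)), x̂_o(0) = x_o(0), and C ẋ̂_o(t) = C ẋ_o(t) (the sliding-mode condition that the output derivatives coincide). Then x̂_o(t) = x_o(t) for all t ≥ 0, and the equivalent control satisfies u_{1eq}(t) = − d(t) − d_0(t) for all t ≥ 0. -/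
open Matrix

/-!
Since `C * B` is invertible, equality of the output derivatives determines the total matched input
mismatch `w = d + d₀ + u1eq` as a linear function of the state error `e = xhat - xo`:
`w = -(C B)⁻¹ C A e` (`mismatch_eq`). Substituting, the error solves the autonomous linear equation
`e' = (A - B (C B)⁻¹ C A) e` with `e 0 = 0`, so it vanishes by uniqueness for ODEs with Lipschitz
right-hand side (`linear_ode_eq_zero`); then `w = 0` as well.
-/

/-- A linear homogeneous ODE with constant coefficients and zero initial value has only the zero
solution. -/
lemma linear_ode_eq_zero {n : ℕ} (M : Matrix (Fin n) (Fin n) ℝ) (e : ℝ → Fin n → ℝ)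
    (he : ∀ t, HasDerivAt e (M *ᵥ e t) t) (h0 : e 0 = 0) : e = 0 := by
  let L : (Fin n → ℝ) →L[ℝ] (Fin n → ℝ) := LinearMap.toContinuousLinearMap M.mulVecLin
  refine ODE_solution_unique_univ (v := fun _ x => L x) (s := fun _ => Set.univ) (t₀ := 0)
    (fun _ => L.lipschitz.lipschitzOnWith) (fun t => ⟨he t, trivial⟩) (fun t => ⟨?_, trivial⟩) h0
  simp

lemma mismatch_eq {n m : ℕ} {A : Matrix (Fin n) (Fin n) ℝ} {B : Matrix (Fin n) (Fin m) ℝ}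
    {C : Matrix (Fin m) (Fin n) ℝ} (hCB : IsUnit (C * B)) {e : Fin n → ℝ} {w : Fin m → ℝ}
    (h : C *ᵥ (A *ᵥ e + B *ᵥ w) = 0) : w = -(((C * B)⁻¹ * C * A) *ᵥ e) := by
  have hdet := (Matrix.isUnit_iff_isUnit_det _).1 hCB
  have h1 := congrArg (fun v => (C * B)⁻¹ *ᵥ v) h
  simp only [mulVec_add, mulVec_mulVec, mulVec_zero, ← Matrix.mul_assoc] at h1
  rw [Matrix.mul_assoc _ C B, Matrix.nonsing_inv_mul _ hdet, one_mulVec] at h1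
  exact eq_neg_of_add_eq_zero_right h1

/-- Under the sliding-mode condition that the output derivatives coincide, the perturbed
state trajectory equals the nominal one and the equivalent control is `-d - d₀`. -/
theorem equivalent_control_and_state_matching
    (n m : ℕ) (hn : 0 < n) (hm : 0 < m)
    (A : Matrix (Fin n) (Fin n) ℝ) (B : Matrix (Fin n) (Fin m) ℝ)
    (C : Matrix (Fin m) (Fin n) ℝ)
    (hCB : IsUnit (C * B))
    (xo xhat : ℝ → Fin n → ℝ) (u0 d d0 u1eq : ℝ → Fin m → ℝ)
    (hxo : ∀ t, HasDerivAt xo (A.mulVec (xo t) + B.mulVec (u0 t)) t)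
    (hxhat : ∀ t, HasDerivAt xhat
      (A.mulVec (xhat t) + B.mulVec (u0 t + d t + d0 t + u1eq t)) t)
    (h0 : xhat 0 = xo 0)
    (hout : ∀ t, C.mulVec (A.mulVec (xhat t) + B.mulVec (u0 t + d t + d0 t + u1eq t))
      = C.mulVec (A.mulVec (xo t) + B.mulVec (u0 t))) :
    (∀ t : ℝ, 0 ≤ t → xhat t = xo t) ∧
    (∀ t : ℝ, 0 ≤ t → u1eq t = -d t - d0 t) := by
  have hdiff : ∀ t, A *ᵥ xhat t + B *ᵥ (u0 t + d t + d0 t + u1eq t) - (A *ᵥ xo t + B *ᵥ u0 t)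
      = A *ᵥ (xhat t - xo t) + B *ᵥ (d t + d0 t + u1eq t) := fun t => by
    simp only [mulVec_add, mulVec_sub]
    abel
  have hw : ∀ t, d t + d0 t + u1eq t = -(((C * B)⁻¹ * C * A) *ᵥ (xhat t - xo t)) := fun t =>
    mismatch_eq hCB (by rw [← hdiff, mulVec_sub, hout, sub_self])
  have he : xhat - xo = 0 := by
    refine linear_ode_eq_zero (A - B * ((C * B)⁻¹ * C * A)) _ (fun t => ?_) (by simp [h0])
    have h := (hxhat t).sub (hxo t)
    rw [hdiff, hw, mulVec_neg, mulVec_mulVec, ← sub_eq_add_neg, ← sub_mulVec] at h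
    exact h
  have hx : ∀ t, xhat t = xo t := fun t => sub_eq_zero.1 (congrFun he t)
  refine ⟨fun t _ => hx t, fun t _ => ?_⟩
  have h := hw t
  rw [hx, sub_self, mulVec_zero, neg_zero] at h
  rw [eq_neg_of_add_eq_zero_right h]
  abel
end

section
/- Let m be a positive integer and let G, K ∈ ℝ^{m×m} be such that the matrix G K is positive definite in the sense that σᵀ(GK)σ > 0 for every nonzero σ ∈ ℝ^m. Let μ > 0 be the smallest eigenvalue of the symmetric part ½(GK + (GK)ᵀ), and let ‖G‖ denote the spectral norm of G (equal to the square root of the largest eigenvalue of GᵀG). Let d̄, d̄_0 ≥ 0 and let d, d_0 ∈ ℝ^m satisfy ‖d‖ ≤ d̄ and ‖d_0‖ ≤ d̄_0. If ρ > ‖G‖(d̄ + d̄_0)/μ, then for every nonzero σ ∈ ℝ^m, ⟨σ, G(d + d_0) + ρ G K σ/‖σ‖⟩ ≥ (ρ μ − ‖G‖(d̄ + d̄_0)) ‖σ‖ > 0; equivalently, along the sliding dynamics σ̇ = −G(d + d_0) − ρ G K σ/‖σ‖ the Lyapunov function V(σ) = ½ σᵀσ satisfies V̇ ≤ −η ‖σ‖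 with η := ρ μ − ‖G‖(d̄ + d̄_0) > 0. -/
/-!
Both spectral quantities enter through the Rayleigh quotient: in an orthonormal eigenbasis a real
symmetric matrix `A` acts as `x ⬝ᵥ A *ᵥ x = ∑ i, λ i * y i ^ 2` with `x ⬝ᵥ x = ∑ i, y i ^ 2`
(`exists_diagonal_coords`), so the quadratic form lies between the extreme eigenvalues times
`x ⬝ᵥ x`. Applied to the symmetric part of `G * K`, which has the same quadratic form as `G * K`,
this bounds the control term below by `ρ μ ‖σ‖`. Applied to `Gᵀ * G` it gives `‖G e‖ ≤ ‖G‖ ‖e‖`,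
and with Cauchy–Schwarz and the triangle inequality the disturbance term is at least
`-‖G‖ (d̄ + d̄₀) ‖σ‖`.
-/

open Matrix

lemma sqrt_dotProduct_self {n : ℕ} (v : Fin n → ℝ) :
    Real.sqrt (v ⬝ᵥ v) = ‖WithLp.toLp 2 v‖ := by
  rw [EuclideanSpace.norm_eq]
  simp [dotProduct, sq]

lemma abs_dotProduct_le {n : ℕ} (v w : Fin n → ℝ) :
    |v ⬝ᵥ w| ≤ Real.sqrt (v ⬝ᵥ v) * Real.sqrt (w ⬝ᵥ w) := by
  have h := abs_real_inner_le_norm (WithLp.toLp 2 w) (WithLp.toLp 2 v)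
  rw [EuclideanSpace.inner_toLp_toLp] at h
  rw [sqrt_dotProduct_self, sqrt_dotProduct_self, mul_comm]
  simpa using h

lemma sqrt_dotProduct_add_le {n : ℕ} (v w : Fin n → ℝ) :
    Real.sqrt ((v + w) ⬝ᵥ (v + w)) ≤ Real.sqrt (v ⬝ᵥ v) + Real.sqrt (w ⬝ᵥ w) := by
  simp only [sqrt_dotProduct_self, WithLp.toLp_add]
  exact norm_add_le _ _

/-- In the coordinates `y` of `x` with respect to an orthonormal eigenbasis, the quadratic form of
a symmetric matrix is diagonal. -/
lemma exists_diagonal_coords {n : ℕ} {A : Matrix (Fin n) (Fin n) ℝ} (hA : A.IsHermitian)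
    (x : Fin n → ℝ) :
    ∃ y : Fin n → ℝ, x ⬝ᵥ x = ∑ i, y i ^ 2 ∧
      x ⬝ᵥ A *ᵥ x = ∑ i, hA.eigenvalues i * y i ^ 2 := by
  have key : ∀ i, inner ℝ (hA.eigenvectorBasis i) (WithLp.toLp 2 (A *ᵥ x))
      = hA.eigenvalues i * inner ℝ (hA.eigenvectorBasis i) (WithLp.toLp 2 x) := by
    intro i
    have hT : Aᵀ = A := by simpa using hA.eq
    have h := hA.mulVec_eigenvectorBasis i
    rw [EuclideanSpace.inner_eq_star_dotProduct, EuclideanSpace.inner_eq_star_dotProduct]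
    simp only [star_trivial]
    rw [dotProduct_comm, dotProduct_mulVec, ← mulVec_transpose, hT, h, smul_dotProduct,
      dotProduct_comm, smul_eq_mul]
  have hdot : ∀ v w : Fin n → ℝ, v ⬝ᵥ w = inner ℝ (WithLp.toLp 2 v) (WithLp.toLp 2 w) := by
    intro v w
    rw [EuclideanSpace.inner_toLp_toLp, star_trivial, dotProduct_comm]
  refine ⟨fun i => inner ℝ (hA.eigenvectorBasis i) (WithLp.toLp 2 x), ?_, ?_⟩
  · rw [hdot, ← hA.eigenvectorBasis.sum_inner_mul_inner]
    refine Finset.sum_congr rfl fun i _ => ?_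
    rw [real_inner_comm, sq]
  · rw [hdot, ← hA.eigenvectorBasis.sum_inner_mul_inner]
    refine Finset.sum_congr rfl fun i _ => ?_
    rw [key, real_inner_comm]
    ring

lemma iInf_eigenvalues_mul_le {n : ℕ} {A : Matrix (Fin n) (Fin n) ℝ} (hA : A.IsHermitian)
    (x : Fin n → ℝ) : (⨅ i, hA.eigenvalues i) * (x ⬝ᵥ x) ≤ x ⬝ᵥ A *ᵥ x := by
  obtain ⟨y, h1, h2⟩ := exists_diagonal_coords hA x
  rw [h1, h2, Finset.mul_sum]
  exact Finset.sum_le_sum fun i _ => mul_le_mul_of_nonneg_right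
    (ciInf_le (Set.finite_range _).bddBelow i) (sq_nonneg _)

lemma le_iSup_eigenvalues_mul {n : ℕ} {A : Matrix (Fin n) (Fin n) ℝ} (hA : A.IsHermitian)
    (x : Fin n → ℝ) : x ⬝ᵥ A *ᵥ x ≤ (⨆ i, hA.eigenvalues i) * (x ⬝ᵥ x) := by
  obtain ⟨y, h1, h2⟩ := exists_diagonal_coords hA x
  rw [h1, h2, Finset.mul_sum]
  exact Finset.sum_le_sum fun i _ => mul_le_mul_of_nonneg_right
    (le_ciSup (Set.finite_range _).bddAbove i) (sq_nonneg _)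

/-- The square root of the largest eigenvalue of `Gᵀ * G` bounds the Euclidean operator norm
of `G`. -/
lemma sqrt_dotProduct_mulVec_le {n : ℕ} (G : Matrix (Fin n) (Fin n) ℝ)
    (hGG : (Gᵀ * G).IsHermitian) (e : Fin n → ℝ) :
    Real.sqrt (G *ᵥ e ⬝ᵥ G *ᵥ e) ≤
      Real.sqrt (⨆ i, hGG.eigenvalues i) * Real.sqrt (e ⬝ᵥ e) := by
  have h := le_iSup_eigenvalues_mul hGG e
  have h0 : 0 ≤ e ⬝ᵥ e := Finset.sum_nonneg fun i _ => mul_self_nonneg _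
  rw [← Real.sqrt_mul' _ h0]
  apply Real.sqrt_le_sqrt
  rwa [← mulVec_mulVec, dotProduct_mulVec, vecMul_transpose] at h

lemma dotProduct_symmPart_mulVec {n : ℕ} (M : Matrix (Fin n) (Fin n) ℝ) (x : Fin n → ℝ) :
    x ⬝ᵥ ((1 / 2 : ℝ) • (M + Mᵀ)) *ᵥ x = x ⬝ᵥ M *ᵥ x := by
  have h : x ⬝ᵥ Mᵀ *ᵥ x = x ⬝ᵥ M *ᵥ x := by
    rw [mulVec_transpose, dotProduct_comm, ← dotProduct_mulVec]
  rw [smul_mulVec, add_mulVec, dotProduct_smul, dotProduct_add, h, smul_eq_mul]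
  ring

/-- Reachability condition for the data-driven integral sliding mode: if the unit-vector
gain `ρ` dominates `‖G‖(d̄ + d̄₀)/μ`, where `μ` is the smallest eigenvalue of the symmetric
part of `G K` and `‖G‖` is the spectral norm of `G`, then
`⟨σ, G(d + d₀) + ρ G K σ/‖σ‖⟩ ≥ (ρ μ - ‖G‖(d̄ + d̄₀))‖σ‖ > 0` for every `σ ≠ 0`. -/
theorem reachability_condition
    (m : ℕ) (hm : 0 < m) (G K : Matrix (Fin m) (Fin m) ℝ)
    (hGK : ∀ σ : Fin m → ℝ, σ ≠ 0 → 0 < σ ⬝ᵥ (G * K).mulVec σ)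
    (hS : ((1 / 2 : ℝ) • (G * K + (G * K)ᵀ)).IsHermitian)
    (μ : ℝ) (hμ : μ = ⨅ i, hS.eigenvalues i) (hμpos : 0 < μ)
    (hGG : (Gᵀ * G).IsHermitian)
    (normG : ℝ) (hnormG : normG = Real.sqrt (⨆ i, hGG.eigenvalues i))
    (dbar dbar0 : ℝ) (hdbar : 0 ≤ dbar) (hdbar0 : 0 ≤ dbar0)
    (d d0 : Fin m → ℝ)
    (hd : Real.sqrt (d ⬝ᵥ d) ≤ dbar) (hd0 : Real.sqrt (d0 ⬝ᵥ d0) ≤ dbar0)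
    (ρ : ℝ) (hρ : ρ > normG * (dbar + dbar0) / μ) :
    ∀ σ : Fin m → ℝ, σ ≠ 0 →
      (ρ * μ - normG * (dbar + dbar0)) * Real.sqrt (σ ⬝ᵥ σ)
          ≤ σ ⬝ᵥ (G.mulVec (d + d0)
            + (ρ / Real.sqrt (σ ⬝ᵥ σ)) • (G * K).mulVec σ) ∧
        0 < (ρ * μ - normG * (dbar + dbar0)) * Real.sqrt (σ ⬝ᵥ σ) := by
  intro σ hσ
  have hs : 0 < σ ⬝ᵥ σ := (Finset.sum_nonneg fun i _ => mul_self_nonneg _).lt_of_ne'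
    (dotProduct_self_eq_zero.not.2 hσ)
  have hs' : 0 < Real.sqrt (σ ⬝ᵥ σ) := Real.sqrt_pos.2 hs
  have hN : 0 ≤ normG := hnormG ▸ Real.sqrt_nonneg _
  have hρ0 : 0 < ρ := lt_of_le_of_lt (by positivity) hρ
  have hη : 0 < ρ * μ - normG * (dbar + dbar0) := by
    have := (div_lt_iff₀ hμpos).1 hρ
    linarith
  refine ⟨?_, mul_pos hη hs'⟩
  have hK : μ * (σ ⬝ᵥ σ) ≤ σ ⬝ᵥ (G * K) *ᵥ σ := by
    have h := iInf_eigenvalues_mul_le hS σ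
    rwa [dotProduct_symmPart_mulVec, ← hμ] at h
  have hG : Real.sqrt (G *ᵥ (d + d0) ⬝ᵥ G *ᵥ (d + d0)) ≤ normG * (dbar + dbar0) := by
    have h := sqrt_dotProduct_mulVec_le G hGG (d + d0)
    rw [← hnormG] at h
    refine h.trans (mul_le_mul_of_nonneg_left ?_ hN)
    exact (sqrt_dotProduct_add_le d d0).trans (add_le_add hd hd0)
  have hdist : -(Real.sqrt (σ ⬝ᵥ σ) * (normG * (dbar + dbar0))) ≤ σ ⬝ᵥ G *ᵥ (d + d0) :=
    (abs_le.1 ((abs_dotProduct_le _ _).trans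
      (mul_le_mul_of_nonneg_left hG hs'.le))).1
  have hctrl : ρ * μ * Real.sqrt (σ ⬝ᵥ σ) ≤
      ρ / Real.sqrt (σ ⬝ᵥ σ) * (σ ⬝ᵥ (G * K) *ᵥ σ) := by
    refine le_trans (le_of_eq ?_) (mul_le_mul_of_nonneg_left hK (by positivity))
    rw [div_mul_eq_mul_div, eq_div_iff hs'.ne']
    linear_combination ρ * μ * Real.mul_self_sqrt hs.le
  rw [dotProduct_add, dotProduct_smul, smul_eq_mul]
  linarith
end

section
/- Let m be a positive integer, let Ā ∈ ℝ^{m×m} be symmetric positive definite, let ζ̄ ∈ ℝ^{m×m}, set B̄ := −Ā ζ̄ and C̄ := B̄ᵀ Ā^{-1} B̄ − I, and suppose W ∈ ℝ^{m×m} and λ > 0 satisfy the linear matrix inequality [[−(W ζ̄ᵀ + ζ̄ Wᵀ) + λ Ā^{-1}, W], [Wᵀ, −λ I]] ≺ 0. Then: (i) for every Z ∈ ℝ^{m×m} with Zᵀ Ā Z + Zᵀ B̄ + B̄ᵀ Z + C̄ ⪯ 0, the matrix W Zᵀ + Z Wᵀ is positive definite; and (ii) if moreover G ∈ ℝ^{m×m}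 is invertible and Z := (Gᵀ)^{-1} satisfies the same ellipsoid inequality (i.e., Zᵀ = G^{-1} belongs to the consistency set), then W is invertible and, with K := W^{-1}, the matrix G K is positive definite: xᵀ(G K)x > 0 for every nonzero x ∈ ℝ^m. -/
/-!
The constant term makes the ellipsoid inequality a completed square: with `D = Z - ζbar` it says
`DᵀĀD ⪯ 1`. Duality turns this into `DDᵀ ⪯ Ā⁻¹` (`normSq_transpose_mulVec_le`). Evaluating the
LMI at the vector `(x, -Dᵀx)` then gives
`xᵀ(WZᵀ + ZWᵀ)x > lam * (xᵀĀ⁻¹x - ‖Dᵀx‖²) ≥ 0`, which is (i).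
For (ii), with `Zᵀ = G⁻¹`, (i) says that `M = WG⁻¹` has a positive quadratic form. A matrix with
positive quadratic form is invertible, and its inverse `M⁻¹ = GW⁻¹` again has positive quadratic
form (`isUnit_and_inv_pos`).
-/

open Matrix

/-- `DᵀAD ⪯ 1` implies `DDᵀ ⪯ A⁻¹`, in quadratic-form language. -/
lemma normSq_transpose_mulVec_le {n : Type*} [Fintype n] [DecidableEq n]
    {A D : Matrix n n ℝ} (hA : A.PosDef)
    (hD : ∀ y : n → ℝ, y ⬝ᵥ (Dᵀ * A * D) *ᵥ y ≤ y ⬝ᵥ y) (x : n → ℝ) :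
    (Dᵀ *ᵥ x) ⬝ᵥ (Dᵀ *ᵥ x) ≤ x ⬝ᵥ A⁻¹ *ᵥ x := by
  have hT : Aᵀ = A := hA.isHermitian
  have hAA : A * A⁻¹ = 1 := mul_nonsing_inv A ((isUnit_iff_isUnit_det A).1 hA.isUnit)
  -- Complete the square: expand `0 ≤ (A⁻¹x - DDᵀx)ᵀ A (A⁻¹x - DDᵀx)`.
  have hsq := hA.posSemidef.dotProduct_mulVec_nonneg (A⁻¹ *ᵥ x - D *ᵥ (Dᵀ *ᵥ x))
  have hy := hD (Dᵀ *ᵥ x)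
  set y := Dᵀ *ᵥ x with hydef
  have e1 : A *ᵥ (A⁻¹ *ᵥ x) = x := by rw [mulVec_mulVec, hAA, one_mulVec]
  have e2 : x ⬝ᵥ D *ᵥ y = y ⬝ᵥ y := by
    rw [dotProduct_mulVec, ← mulVec_transpose]
  have e3 : (A⁻¹ *ᵥ x) ⬝ᵥ A *ᵥ (D *ᵥ y) = y ⬝ᵥ y := by
    rw [dotProduct_mulVec, ← mulVec_transpose, hT, e1, e2]
  have e4 : (D *ᵥ y) ⬝ᵥ A *ᵥ (D *ᵥ y) = y ⬝ᵥ (Dᵀ * A * D) *ᵥ y := by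
    rw [← mulVec_mulVec, ← mulVec_mulVec, dotProduct_mulVec y Dᵀ, vecMul_transpose]
  simp only [star_trivial, mulVec_sub, dotProduct_sub, sub_dotProduct, e1, e3, e4,
    dotProduct_comm _ x, e2] at hsq
  linarith

lemma isUnit_and_inv_pos {n : Type*} [Fintype n] [DecidableEq n] {M : Matrix n n ℝ}
    (hM : ∀ x : n → ℝ, x ≠ 0 → 0 < x ⬝ᵥ M *ᵥ x) :
    IsUnit M ∧ ∀ x : n → ℝ, x ≠ 0 → 0 < x ⬝ᵥ M⁻¹ *ᵥ x := by
  have hu : IsUnit M := by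
    rw [← mulVec_injective_iff_isUnit]
    intro x y hxy
    by_contra hne
    have h := hM (x - y) (sub_ne_zero.2 hne)
    rw [mulVec_sub, sub_eq_zero.2 hxy, dotProduct_zero] at h
    exact h.false
  refine ⟨hu, fun x hx => ?_⟩
  have e : M *ᵥ (M⁻¹ *ᵥ x) = x := by
    rw [mulVec_mulVec, mul_nonsing_inv M ((isUnit_iff_isUnit_det M).1 hu), one_mulVec]
  have h := hM (M⁻¹ *ᵥ x) (fun h0 => hx (by rw [← e, h0, mulVec_zero]))
  rwa [e, dotProduct_comm] at h

/-- Data-based tuning of the discontinuous control gain: if `(W, λ)` solves the LMI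
`[[-(Wζ̄ᵀ + ζ̄Wᵀ) + λĀ⁻¹, W], [Wᵀ, -λI]] ≺ 0`, then (i) `WZᵀ + ZWᵀ ≻ 0` for every `Z` in
the data-consistency ellipsoid, and (ii) if the true `(Gᵀ)⁻¹` lies in the ellipsoid then
`W` is invertible and `G K ≻ 0` with `K := W⁻¹`. -/
theorem data_based_gain_design
    (m : ℕ) (hm : 0 < m)
    (Abar : Matrix (Fin m) (Fin m) ℝ) (hA : Abar.PosDef)
    (ζbar W : Matrix (Fin m) (Fin m) ℝ)
    (Bbar Cbar : Matrix (Fin m) (Fin m) ℝ)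
    (hBbar : Bbar = -(Abar * ζbar))
    (hCbar : Cbar = Bbarᵀ * Abar⁻¹ * Bbar - 1)
    (lam : ℝ) (hlam : 0 < lam)
    (hLMI : (-(Matrix.fromBlocks (-(W * ζbarᵀ + ζbar * Wᵀ) + lam • Abar⁻¹) W Wᵀ
        (-(lam • (1 : Matrix (Fin m) (Fin m) ℝ))))).PosDef) :
    (∀ Z : Matrix (Fin m) (Fin m) ℝ,
      (-(Zᵀ * Abar * Z + Zᵀ * Bbar + Bbarᵀ * Z + Cbar)).PosSemidef →
      (W * Zᵀ + Z * Wᵀ).PosDef) ∧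
    (∀ G : Matrix (Fin m) (Fin m) ℝ, IsUnit G →
      (-((Gᵀ)⁻¹ᵀ * Abar * (Gᵀ)⁻¹ + (Gᵀ)⁻¹ᵀ * Bbar + Bbarᵀ * (Gᵀ)⁻¹ + Cbar)).PosSemidef →
      IsUnit W ∧ ∀ x : Fin m → ℝ, x ≠ 0 → 0 < x ⬝ᵥ (G * W⁻¹).mulVec x) := by
  have hT : Abarᵀ = Abar := hA.isHermitian
  have hdet : IsUnit Abar.det := (isUnit_iff_isUnit_det _).1 hA.isUnit
  have key : ∀ Z : Matrix (Fin m) (Fin m) ℝ,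
      (-(Zᵀ * Abar * Z + Zᵀ * Bbar + Bbarᵀ * Z + Cbar)).PosSemidef →
      (W * Zᵀ + Z * Wᵀ).PosDef := by
    intro Z hZ
    have hsquare : Zᵀ * Abar * Z + Zᵀ * Bbar + Bbarᵀ * Z + Cbar
        = (Z - ζbar)ᵀ * Abar * (Z - ζbar) - 1 := by
      have hB : Bbarᵀ * Abar⁻¹ = -ζbarᵀ := by
        rw [hBbar, transpose_neg, transpose_mul, hT, Matrix.neg_mul, Matrix.mul_assoc,
          mul_nonsing_inv _ hdet, Matrix.mul_one]
      rw [hCbar, hB, hBbar]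
      simp only [transpose_neg, transpose_mul, transpose_sub, hT]
      noncomm_ring
    have hD : ∀ y : Fin m → ℝ,
        y ⬝ᵥ ((Z - ζbar)ᵀ * Abar * (Z - ζbar)) *ᵥ y ≤ y ⬝ᵥ y := by
      intro y
      have h := hZ.dotProduct_mulVec_nonneg y
      rw [hsquare, star_trivial, neg_mulVec, sub_mulVec, one_mulVec, dotProduct_neg,
        dotProduct_sub] at h
      linarith
    refine PosDef.of_dotProduct_mulVec_pos ?_ fun x hx => ?_
    · rw [IsHermitian, conjTranspose_eq_transpose_of_trivial, transpose_add, transpose_mul,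
        transpose_mul, transpose_transpose, transpose_transpose, add_comm]
    have hle := normSq_transpose_mulVec_le hA hD x
    have hpos := hLMI.dotProduct_mulVec_pos
      (x := Sum.elim x (-((Z - ζbar)ᵀ *ᵥ x)))
      (fun h => hx (funext fun i => congrFun h (Sum.inl i)))
    -- A matrix and its transpose have the same quadratic form.
    have sym : ∀ M N : Matrix (Fin m) (Fin m) ℝ, x ⬝ᵥ (M * Nᵀ) *ᵥ x = x ⬝ᵥ (N * Mᵀ) *ᵥ x := by
      intro M N
      rw [dotProduct_mulVec, ← mulVec_transpose, dotProduct_comm, transpose_mul,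
        transpose_transpose]
    have hW : ∀ y : Fin m → ℝ, y ⬝ᵥ Wᵀ *ᵥ x = x ⬝ᵥ W *ᵥ y := by
      intro y
      rw [mulVec_transpose, dotProduct_comm, ← dotProduct_mulVec]
    have hdec : x ⬝ᵥ W *ᵥ ((Z - ζbar)ᵀ *ᵥ x)
        = x ⬝ᵥ (W * Zᵀ) *ᵥ x - x ⬝ᵥ (W * ζbarᵀ) *ᵥ x := by
      rw [mulVec_mulVec, transpose_sub, Matrix.mul_sub, sub_mulVec, dotProduct_sub]
    have hs1 := sym ζbar W
    have hs2 := sym Z W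
    rw [star_trivial, neg_mulVec, fromBlocks_mulVec, dotProduct_neg,
      sumElim_dotProduct_sumElim] at hpos
    simp only [Sum.elim_comp_inl, Sum.elim_comp_inr, add_mulVec, neg_mulVec, smul_mulVec,
      one_mulVec, mulVec_neg, dotProduct_add, dotProduct_neg, neg_dotProduct, dotProduct_smul,
      smul_eq_mul, hW, hdec] at hpos
    rw [star_trivial, add_mulVec, dotProduct_add]
    have := mul_le_mul_of_nonneg_left hle hlam.le
    linarith
  refine ⟨key, fun G hG hell => ?_⟩
  have hGdet : IsUnit G.det := (isUnit_iff_isUnit_det _).1 hG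
  have hpd := key _ hell
  rw [← transpose_nonsing_inv, transpose_transpose] at hpd
  have hM : ∀ x : Fin m → ℝ, x ≠ 0 → 0 < x ⬝ᵥ (W * G⁻¹) *ᵥ x := by
    intro x hx
    have h := hpd.dotProduct_mulVec_pos hx
    have hs : x ⬝ᵥ (G⁻¹ᵀ * Wᵀ) *ᵥ x = x ⬝ᵥ (W * G⁻¹) *ᵥ x := by
      rw [← transpose_mul, mulVec_transpose, dotProduct_comm, ← dotProduct_mulVec]
    rw [star_trivial, add_mulVec, dotProduct_add, hs] at h
    linarith
  obtain ⟨hu, hinv⟩ := isUnit_and_inv_pos hM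
  rw [Matrix.mul_inv_rev, nonsing_inv_nonsing_inv G hGdet] at hinv
  refine ⟨?_, hinv⟩
  have hWG : W = W * G⁻¹ * G := by
    rw [Matrix.mul_assoc, nonsing_inv_mul G hGdet, Matrix.mul_one]
  rw [hWG]
  exact hu.mul hG
end
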